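/- arXiv:2305.02922 — 2 statements merged into one kernel-verified Lean document; each statement's English description precedes it below -/
import Mathlib

section
/- Let T be a tournament and let c ≥ d ≥ 0 be integers with c ≥ 1. Suppose v_0, v_1, …, v_k (with k ≥ 1 and v_0 ≠ v_k) are the vertices of a shortest directed path from v_0 to v_k in T, that the dichromatic number of T[N⁺(v_0) ∪ N⁻(v_k)] is at most c, and that for every 1 ≤ i ≤ k the dichromatic number of T[N(e_i)] is at most d. Then the dichromatic number of T is at most c + 4d. -/
/-- A tournament on a vertex type `V`: for every two distinct vertices exactly one
of the two possible arcs is present, and there are no loops. -/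
structure Tournament (V : Type) where
  arc : V → V → Prop
  asymm : ∀ u v, arc u v → ¬ arc v u
  total : ∀ u v, u ≠ v → arc u v ∨ arc v u

namespace Tournament

variable {V : Type}

/-- A set of vertices is transitive (acyclic) if it contains no directed triangle. -/
def IsTransitiveSet (T : Tournament V) (S : Set V) : Prop :=
  ∀ a ∈ S, ∀ b ∈ S, ∀ c ∈ S, ¬ (T.arc a b ∧ T.arc b c ∧ T.arc c a)

/-- Out-neighborhood `N⁺(v)`. -/
def outN (T : Tournament V) (v : V) : Set V := {w | T.arc v w}

/-- In-neighborhood `N⁻(v)`. -/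
def inN (T : Tournament V) (v : V) : Set V := {w | T.arc w v}

/-- Arc neighborhood `N(uv)` of an arc `u → v`: vertices forming a directed
triangle with the arc. -/
def arcNbhd (T : Tournament V) (u v : V) : Set V := {w | T.arc v w ∧ T.arc w u}

/-- `T.ColorableOn S k` means the induced subtournament `T[S]` can be partitioned
into at most `k` transitive sets. -/
def ColorableOn (T : Tournament V) (S : Set V) (k : ℕ) : Prop :=
  ∃ f : V → ℕ, (∀ v ∈ S, f v < k) ∧ ∀ i : ℕ, T.IsTransitiveSet {v | v ∈ S ∧ f v = i}

/-- The dichromatic number of `T`: the least `k` such that `V(T)` can be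
partitioned into `k` transitive sets. -/
noncomputable def dichromaticNumber (T : Tournament V) : ℕ :=
  sInf {k | T.ColorableOn Set.univ k}

/-- An arc `u → v` is heavy if `N(uv)` contains a directed triangle. -/
def IsHeavy (T : Tournament V) (u v : V) : Prop :=
  T.arc u v ∧ ∃ a b c,
    a ∈ T.arcNbhd u v ∧ b ∈ T.arcNbhd u v ∧ c ∈ T.arcNbhd u v ∧
    T.arc a b ∧ T.arc b c ∧ T.arc c a

/-- A tournament is light if it has no heavy arc. -/
def IsLight (T : Tournament V) : Prop := ∀ u v, ¬ T.IsHeavy u v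

/-- The induced subtournament `T[S]` is light: for every arc within `S`, the part
of its arc neighborhood inside `S` is transitive. -/
def LightOn (T : Tournament V) (S : Set V) : Prop :=
  ∀ u ∈ S, ∀ v ∈ S, T.arc u v → T.IsTransitiveSet (T.arcNbhd u v ∩ S)

/-- `S` is the vertex set of a directed triangle. -/
def IsTriangle (T : Tournament V) (S : Set V) : Prop :=
  ∃ a b c, S = {a, b, c} ∧ T.arc a b ∧ T.arc b c ∧ T.arc c a

/-- `S ⇒ U`: every arc between `S` and `U` is directed from `S` to `U`. -/
def Beats (T : Tournament V) (S U : Set V) : Prop :=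
  ∀ s ∈ S, ∀ u ∈ U, T.arc s u

/-- `X 0, …, X (L-1)` is a `C₃`-chain of length `L`: pairwise vertex-disjoint
directed triangles with `X i ⇒ X (i+1)`. -/
def IsC3Chain (T : Tournament V) (X : ℕ → Set V) (L : ℕ) : Prop :=
  (∀ i < L, T.IsTriangle (X i)) ∧
  (∀ i < L, ∀ j < L, i ≠ j → Disjoint (X i) (X j)) ∧
  (∀ i, i + 1 < L → T.Beats (X i) (X (i + 1)))

/-- `v 0, …, v k` are the vertices of a shortest directed path from `v 0` to `v k`:
consecutive arcs are present, and no directed path (walk) from `v 0` to `v k`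
has fewer than `k` arcs. -/
def IsShortestPath (T : Tournament V) (v : ℕ → V) (k : ℕ) : Prop :=
  (∀ i < k, T.arc (v i) (v (i + 1))) ∧
  (∀ m : ℕ, ∀ p : ℕ → V, p 0 = v 0 → p m = v k →
    (∀ i < m, T.arc (p i) (p (i + 1))) → k ≤ m)

/-- The path decomposition `D 0, …, D (k+1)` associated to the path `v 0, …, v k`:
`D 0 = N⁺(v 0)`, `D i = N(e i) \ (D 0 ∪ ⋯ ∪ D (i-1))` for `1 ≤ i ≤ k` where
`e i` is the arc `v (i-1) → v i`, and `D (k+1) = N⁻(v k) \ (D 0 ∪ ⋯ ∪ D k)`. -/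
def PathDecomp (T : Tournament V) (v : ℕ → V) (k : ℕ) (D : ℕ → Set V) : Prop :=
  D 0 = T.outN (v 0) ∧
  (∀ i, 1 ≤ i → i ≤ k → D i = T.arcNbhd (v (i - 1)) (v i) \ ⋃ j < i, D j) ∧
  D (k + 1) = T.inN (v k) \ ⋃ j < k + 1, D j

end Tournament

namespace Tournament

variable {V : Type}

/-- A walk of length `m` between two path vertices cannot be a shortcut. -/
lemma shortcut (T : Tournament V) (v : ℕ → V) (k : ℕ) (h : T.IsShortestPath v k)
    (i j m : ℕ) (hi : i ≤ k) (hj : j ≤ k) (q : ℕ → V) (h0 : q 0 = v i) (hm : q m = v j)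
    (hq : ∀ n < m, T.arc (q n) (q (n + 1))) : j ≤ i + m := by
  have key := h.2 (i + m + (k - j))
    (fun n => if n ≤ i then v n else if n ≤ i + m then q (n - i) else v (j + (n - i - m)))
    (by simp) (by
      show (if _ then _ else _) = _
      split_ifs with h1 h2
      · have e1 : m = 0 := by omega
        have e2 : k - j = 0 := by omega
        subst e1
        rw [h0] at hm
        have : k = j := by omega
        rw [this] at *
        simp [hm]
      · have : i + m + (k - j) - i = m := by omega
        rw [this, hm]
        congr 1; omega
      · congr 1; omega)
    (by
      intro n hn
      show T.arc (if _ then _ else _) (if _ then _ else _)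
      split_ifs with h1 h2 h3 h4 h5 h6
      · exact h.1 n (by omega)
      · have : n = i := by omega
        subst this
        rw [← h0]
        have := hq 0 (by omega)
        simpa using this
      · have e : n = i := by omega
        have e1 : m = 0 := by omega
        subst e; subst e1
        rw [← h0, hm]
        have := h.1 j (by omega)
        convert this using 2
        omega
      · omega
      · have := hq (n - i) (by omega)
        convert this using 2
        omega
      · have e : n - i = m := by omega
        rw [e, hm]
        have := h.1 j (by omega)
        convert this using 2
        omega
      · omega
      · omega
      · have := h.1 (j + (n - i - m)) (by omega)
        convert this using 2
        omega)
  omega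

lemma back_two (T : Tournament V) (v : ℕ → V) (k : ℕ) (h : T.IsShortestPath v k)
    (i : ℕ) (hi : i + 2 ≤ k) : T.arc (v (i + 2)) (v i) := by
  by_cases e : v (i + 2) = v i
  · have := T.shortcut v k h i (i + 2) 0 (by omega) hi (fun _ => v i) rfl e.symm (by simp)
    omega
  · rcases T.total _ _ e with h1 | h1
    · exact h1
    · have := T.shortcut v k h i (i + 2) 1 (by omega) hi
        (fun n => if n = 0 then v i else v (i + 2)) (by simp) (by simp)
        (by intro n hn; have : n = 0 := by omega
            subst this; simpa using h1)
      omega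

lemma cover (T : Tournament V) (v : ℕ → V) (k : ℕ) (hk : 1 ≤ k) (h : T.IsShortestPath v k)
    (w : V) : ∃ a, a ≤ k + 1 ∧ (a ≤ k → T.arc (v a) w) ∧ (1 ≤ a → T.arc w (v (a - 1))) := by
  by_cases hw : ∃ j, j ≤ k ∧ w = v j
  · obtain ⟨j, hj, rfl⟩ := hw
    match j, hj with
    | 0, hj =>
      refine ⟨2, by omega, fun h2 => T.back_two v k h 0 (by omega), fun _ => h.1 0 (by omega)⟩
    | 1, hj => exact ⟨0, by omega, fun _ => h.1 0 (by omega), by omega⟩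
    | j + 2, hj =>
      exact ⟨j + 1, by omega, fun _ => h.1 (j + 1) (by omega), fun _ => T.back_two v k h j hj⟩
  · push Not at hw
    classical
    have hex : ∃ a, a = k + 1 ∨ T.arc (v a) w := ⟨k + 1, Or.inl rfl⟩
    have hle : Nat.find hex ≤ k + 1 := Nat.find_min' hex (Or.inl rfl)
    refine ⟨Nat.find hex, hle, fun h1 => ?_, fun h1 => ?_⟩
    · rcases Nat.find_spec hex with h2 | h2
      · omega
      · exact h2
    · have h3 := Nat.find_min hex (m := Nat.find hex - 1) (by omega)
      push Not at h3
      rcases T.total _ _ (hw (Nat.find hex - 1) (by omega)) with h2 | h2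
      · exact h2
      · exact absurd h2 h3.2

lemma level_le (T : Tournament V) (v : ℕ → V) (k : ℕ) (h : T.IsShortestPath v k)
    (a : V → ℕ) (ha : ∀ w, a w ≤ k + 1) (hin : ∀ w, a w ≤ k → T.arc (v (a w)) w)
    (hout : ∀ w, 1 ≤ a w → T.arc w (v (a w - 1))) (x y : V) (hxy : T.arc x y) :
    a y ≤ a x + 4 := by
  by_contra hc
  have hy := ha y
  have := T.shortcut v k h (a x) (a y - 1) 3 (by omega) (by omega)
    (fun n => if n = 0 then v (a x) else if n = 1 then x else if n = 2 then y else v (a y - 1))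
    (by simp) (by simp)
    (by
      intro n hn
      have h1 := hin x (by omega)
      have h2 := hout y (by omega)
      interval_cases n
      · simpa using h1
      · simpa using hxy
      · simpa using h2)
  omega

end Tournament

theorem stmt_2 {V : Type} [Fintype V] (T : Tournament V)
    (c d : ℕ) (hdc : d ≤ c) (hc : 1 ≤ c)
    (k : ℕ) (hk : 1 ≤ k) (v : ℕ → V) (hne : v 0 ≠ v k)
    (hpath : T.IsShortestPath v k)
    (hends : T.ColorableOn (T.outN (v 0) ∪ T.inN (v k)) c)
    (harcs : ∀ i, 1 ≤ i → i ≤ k → T.ColorableOn (T.arcNbhd (v (i - 1)) (v i)) d) :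
    T.ColorableOn Set.univ (c + 4 * d) := by
  choose a ha hin hout using T.cover v k hk hpath
  have hlev := T.level_le v k hpath a ha hin hout
  obtain ⟨h, hh1, hh2⟩ := hends
  choose! F hF1 hF2 using harcs
  have mem0 : ∀ w, (a w = 0 ∨ a w = k + 1) → w ∈ T.outN (v 0) ∪ T.inN (v k) := by
    intro w hw
    rcases hw with hw | hw
    · left; have := hin w (by omega); rw [hw] at this; exact this
    · right; have := hout w (by omega); rw [hw] at this; exact this
  have memi : ∀ w, 1 ≤ a w → a w ≤ k → w ∈ T.arcNbhd (v (a w - 1)) (v (a w)) :=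
    fun w h1 h2 => ⟨hin w h2, hout w h1⟩
  obtain ⟨f, hf0, hfi⟩ : ∃ f : V → ℕ, (∀ w, (a w = 0 ∨ a w = k + 1) → f w = h w) ∧
      ∀ w, 1 ≤ a w → a w ≤ k → f w = F (a w) w := by
    refine ⟨fun w => if a w = 0 ∨ a w = k + 1 then h w else F (a w) w, ?_, ?_⟩
    · intro w hw; simp [hw]
    · intro w h1 h2; exact if_neg (by omega)
  have f0 : ∀ w, f w < c := by
    intro w
    by_cases hw : a w = 0 ∨ a w = k + 1
    · rw [hf0 w hw]; exact hh1 w (mem0 w hw)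
    · have := ha w
      rw [hfi w (by omega) (by omega)]
      have := hF1 (a w) (by omega) (by omega) w (memi w (by omega) (by omega))
      omega
  have fi : ∀ w, 1 ≤ a w → a w ≤ k → f w < d := by
    intro w h1 h2
    rw [hfi w h1 h2]
    exact hF1 (a w) h1 h2 w (memi w h1 h2)
  -- triangles with constant `f` inside the ends
  have triE : ∀ x y z, (a x = 0 ∨ a x = k + 1) → (a y = 0 ∨ a y = k + 1) →
      (a z = 0 ∨ a z = k + 1) → f x = f y → f x = f z →
      ¬ (T.arc x y ∧ T.arc y z ∧ T.arc z x) := by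
    intro x y z hx hy hz e1 e2
    rw [hf0 x hx, hf0 y hy] at e1
    rw [hf0 x hx, hf0 z hz] at e2
    exact hh2 (h x) x ⟨mem0 x hx, rfl⟩ y ⟨mem0 y hy, e1.symm⟩ z ⟨mem0 z hz, e2.symm⟩
  -- triangles with constant `f` and constant level
  have tri : ∀ x y z, a x = a y → a x = a z → f x = f y → f x = f z →
      ¬ (T.arc x y ∧ T.arc y z ∧ T.arc z x) := by
    intro x y z hy hz e1 e2
    by_cases hx : a x = 0 ∨ a x = k + 1
    · exact triE x y z hx (by omega) (by omega) e1 e2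
    · have := ha x
      rw [hfi x (by omega) (by omega), hfi y (by omega) (by omega)] at e1
      rw [hfi x (by omega) (by omega), hfi z (by omega) (by omega)] at e2
      have mx := memi x (by omega) (by omega)
      have my := memi y (by omega) (by omega)
      have mz := memi z (by omega) (by omega)
      rw [← hy] at my e1
      rw [← hz] at mz e2
      exact hF2 (a x) (by omega) (by omega) (F (a x) x) x ⟨mx, rfl⟩ y ⟨my, e1.symm⟩ z
        ⟨mz, e2.symm⟩
  by_cases hk4 : 4 ≤ k
  · refine ⟨fun w => if f w < d then 5 * f w + a w % 5 else f w + 4 * d, ?_, ?_⟩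
    · intro w _
      have := f0 w
      dsimp only
      split_ifs <;> omega
    · rintro i x ⟨-, hx⟩ y ⟨-, hy⟩ z ⟨-, hz⟩ ht
      have pair : ∀ x y, (if f x < d then 5 * f x + a x % 5 else f x + 4 * d) = i →
          (if f y < d then 5 * f y + a y % 5 else f y + 4 * d) = i → T.arc x y →
          f x = f y ∧ a y ≤ a x := by
        intro x y hx hy hxy
        have h1 := hlev x y hxy
        have h2 := fi x
        have h3 := fi y
        have h4 := ha x
        have h5 := ha y
        split_ifs at hx hy <;> omega
      have p1 := pair x y hx hy ht.1
      have p2 := pair y z hy hz ht.2.1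
      have p3 := pair z x hz hx ht.2.2
      exact tri x y z (by omega) (by omega) (by omega) (by omega) ht
  · refine ⟨fun w => if a w = 0 ∨ a w = k + 1 then f w + 4 * d else 4 * f w + (a w - 1), ?_, ?_⟩
    · intro w _
      have := f0 w
      have := fi w
      have := ha w
      dsimp only
      split_ifs <;> omega
    · rintro i x ⟨-, hx⟩ y ⟨-, hy⟩ z ⟨-, hz⟩ ht
      have pair : ∀ x y,
          (if a x = 0 ∨ a x = k + 1 then f x + 4 * d else 4 * f x + (a x - 1)) = i →
          (if a y = 0 ∨ a y = k + 1 then f y + 4 * d else 4 * f y + (a y - 1)) = i →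
          f x = f y ∧ ((a x = 0 ∨ a x = k + 1) ∧ (a y = 0 ∨ a y = k + 1) ∨ a x = a y) := by
        intro x y hx hy
        have h2 := fi x
        have h3 := fi y
        have h4 := ha x
        have h5 := ha y
        split_ifs at hx hy <;> omega
      have p1 := pair x y hx hy
      have p2 := pair x z hx hz
      by_cases hE : a x = 0 ∨ a x = k + 1
      · exact triE x y z hE (by omega) (by omega) p1.1 p2.1 ht
      · exact tri x y z (by omega) (by omega) p1.1 p2.1 ht
end

section
/- Every light tournament has dichromatic number at most 8, i.e., its vertex set can be partitioned into at most eight transitive sets. -/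
namespace Tournament

/-- No directed triangle: subsets of transitive sets are transitive. -/
lemma trans_mono {V : Type} (T : Tournament V) {A B : Set V} (h : A ⊆ B)
    (hB : T.IsTransitiveSet B) : T.IsTransitiveSet A :=
  fun a ha b hb c hc => hB a (h ha) b (h hb) c (h hc)

lemma trans_union {V : Type} (T : Tournament V) {A B : Set V}
    (hA : T.IsTransitiveSet A) (hB : T.IsTransitiveSet B)
    (hAB : ∀ x ∈ A, ∀ y ∈ B, ¬ T.arc x y) : T.IsTransitiveSet (A ∪ B) := by
  rintro a ha b hb c hc ⟨h1, h2, h3⟩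
  have hA' := hA a
  have hB' := hB a
  simp only [Set.mem_union] at ha hb hc
  grind

/-- A cover by `n` transitive sets gives an `n`-coloring. -/
lemma colorable_of_cover {V : Type} (T : Tournament V) (n : ℕ) (S : ℕ → Set V)
    (hS : ∀ i < n, T.IsTransitiveSet (S i)) (hc : ∀ v, ∃ i, i < n ∧ v ∈ S i) :
    T.ColorableOn Set.univ n := by
  choose f hf using hc
  refine ⟨f, fun v _ => (hf v).1, fun i => ?_⟩
  rintro a ⟨-, ha⟩ b ⟨-, hb⟩ c ⟨-, hc⟩ h
  have h1 := hf a
  have h2 := hf b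
  have h3 := hf c
  rw [ha] at h1
  rw [hb] at h2
  rw [hc] at h3
  exact hS i h1.1 a h1.2 b h2.2 c h3.2 h

lemma colorable_of_eight {V : Type} (T : Tournament V) (A B C D E F G H : Set V)
    (hA : T.IsTransitiveSet A) (hB : T.IsTransitiveSet B) (hC : T.IsTransitiveSet C)
    (hD : T.IsTransitiveSet D) (hE : T.IsTransitiveSet E) (hF : T.IsTransitiveSet F)
    (hG : T.IsTransitiveSet G) (hH : T.IsTransitiveSet H)
    (hc : ∀ v, v ∈ A ∨ v ∈ B ∨ v ∈ C ∨ v ∈ D ∨ v ∈ E ∨ v ∈ F ∨ v ∈ G ∨ v ∈ H) :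
    T.ColorableOn Set.univ 8 := by
  apply T.colorable_of_cover 8
    (fun i => match i with
      | 0 => A | 1 => B | 2 => C | 3 => D | 4 => E | 5 => F | 6 => G | _ => H)
  · intro i hi
    interval_cases i <;> assumption
  · intro v
    rcases hc v with h | h | h | h | h | h | h | h
    · exact ⟨0, by norm_num, h⟩
    · exact ⟨1, by norm_num, h⟩
    · exact ⟨2, by norm_num, h⟩
    · exact ⟨3, by norm_num, h⟩
    · exact ⟨4, by norm_num, h⟩
    · exact ⟨5, by norm_num, h⟩
    · exact ⟨6, by norm_num, h⟩
    · exact ⟨7, by norm_num, h⟩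

lemma light_trans {V : Type} (T : Tournament V) (hl : T.IsLight) {u v : V} (h : T.arc u v) :
    T.IsTransitiveSet (T.arcNbhd u v) :=
  fun a ha b hb c hc hh => hl u v ⟨h, a, b, c, ha, hb, hc, hh⟩

/-- Common out-neighbours of three vertices. -/
def outC (T : Tournament V) (a b c : V) : Set V := {w | T.arc a w ∧ T.arc b w ∧ T.arc c w}

/-- Common in-neighbours of three vertices. -/
def inC (T : Tournament V) (a b c : V) : Set V := {w | T.arc w a ∧ T.arc w b ∧ T.arc w c}

lemma irrefl {V : Type} (T : Tournament V) (u : V) : ¬ T.arc u u := fun h => T.asymm u u h h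

lemma mixed {V : Type} (T : Tournament V) {a b c : V} (hab : T.arc a b) (hbc : T.arc b c)
    (hca : T.arc c a) (w : V) :
    w ∈ T.outC a b c ∨ w ∈ T.inC a b c ∨ w ∈ T.arcNbhd a b ∨ w ∈ T.arcNbhd b c ∨
      w ∈ T.arcNbhd c a := by
  have h1 := T.total a w
  have h2 := T.total b w
  have h3 := T.total c w
  simp only [outC, inC, arcNbhd, Set.mem_ofPred_eq]
  by_cases e1 : a = w
  · subst e1; tauto
  by_cases e2 : b = w
  · subst e2; tauto
  by_cases e3 : c = w
  · subst e3; tauto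
  tauto

lemma in_beats_out {V : Type} (T : Tournament V) (hl : T.IsLight) {a b c : V}
    (hab : T.arc a b) (hbc : T.arc b c) (hca : T.arc c a) {u v : V}
    (hu : u ∈ T.inC a b c) (hv : v ∈ T.outC a b c) : T.arc u v := by
  obtain ⟨u1, u2, u3⟩ := hu
  obtain ⟨v1, v2, v3⟩ := hv
  rcases eq_or_ne u v with rfl | hne
  · exact absurd u1 (T.asymm _ _ v1)
  rcases T.total u v hne with h | h
  · exact h
  · exact absurd ⟨h, a, b, c, ⟨u1, v1⟩, ⟨u2, v2⟩, ⟨u3, v3⟩, hab, hbc, hca⟩ (hl v u)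

/-- There is a triangle whose common out-neighbourhood is transitive. -/
lemma exists_sink {V : Type} [Fintype V] (T : Tournament V) (hl : T.IsLight)
    (n : ℕ) : ∀ a b c : V, T.arc a b → T.arc b c → T.arc c a → (T.outC a b c).ncard ≤ n →
    ∃ a b c, T.arc a b ∧ T.arc b c ∧ T.arc c a ∧ T.IsTransitiveSet (T.outC a b c) := by
  induction n with
  | zero =>
    intro a b c hab hbc hca hn
    refine ⟨a, b, c, hab, hbc, hca, ?_⟩
    have : T.outC a b c = ∅ := by
      rw [← Set.ncard_eq_zero (Set.toFinite _)]; omega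
    rw [this]
    intro x hx
    exact absurd hx (Set.notMem_empty _)
  | succ n ih =>
    intro a b c hab hbc hca hn
    by_cases ht : T.IsTransitiveSet (T.outC a b c)
    · exact ⟨a, b, c, hab, hbc, hca, ht⟩
    · unfold IsTransitiveSet at ht
      push Not at ht
      obtain ⟨x, hx, y, hy, z, hz, hxy, hyz, hzx⟩ := ht
      refine ih x y z hxy hyz hzx ?_
      have hlt : (T.outC x y z).ncard < (T.outC a b c).ncard := by
        apply Set.ncard_lt_ncard _ (Set.toFinite _)
        refine ⟨fun w hw => ?_, fun hsub => T.irrefl x (hsub hx).1⟩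
        obtain ⟨x1, x2, x3⟩ := hx
        obtain ⟨y1, y2, y3⟩ := hy
        obtain ⟨z1, z2, z3⟩ := hz
        exact ⟨T.in_beats_out hl hxy hyz hzx ⟨x1, y1, z1⟩ hw,
          T.in_beats_out hl hxy hyz hzx ⟨x2, y2, z2⟩ hw,
          T.in_beats_out hl hxy hyz hzx ⟨x3, y3, z3⟩ hw⟩
      omega

/-- The reversed tournament. -/
def rev (T : Tournament V) : Tournament V where
  arc u v := T.arc v u
  asymm u v h := T.asymm v u h
  total u v h := T.total v u h.symm

lemma rev_light {V : Type} (T : Tournament V) (hl : T.IsLight) : T.rev.IsLight := by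
  rintro u v ⟨h, a, b, c, ha, hb, hc, h1, h2, h3⟩
  exact hl v u ⟨h, a, c, b, ⟨ha.2, ha.1⟩, ⟨hc.2, hc.1⟩, ⟨hb.2, hb.1⟩, h3, h2, h1⟩

lemma exists_source {V : Type} [Fintype V] (T : Tournament V) (hl : T.IsLight)
    (a b c : V) (hab : T.arc a b) (hbc : T.arc b c) (hca : T.arc c a) :
    ∃ a b c, T.arc a b ∧ T.arc b c ∧ T.arc c a ∧ T.IsTransitiveSet (T.inC a b c) := by
  obtain ⟨x, y, z, h1, h2, h3, h4⟩ :=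
    T.rev.exists_sink (T.rev_light hl) _ a c b hca hbc hab le_rfl
  refine ⟨x, z, y, h3, h2, h1, ?_⟩
  rintro p ⟨p1, p2, p3⟩ q ⟨q1, q2, q3⟩ r ⟨r1, r2, r3⟩ ⟨k1, k2, k3⟩
  exact h4 p ⟨p1, p3, p2⟩ r ⟨r1, r3, r2⟩ q ⟨q1, q3, q2⟩ ⟨k3, k2, k1⟩

lemma path_cover {V : Type} (T : Tournament V) (v : ℕ → V) (w : V) (k : ℕ) :
    (∀ i < k, T.arc (v i) (v (i + 1))) →
    T.arc (v 0) w ∨ T.arc w (v k) ∨ (∃ i < k, w ∈ T.arcNbhd (v i) (v (i + 1))) ∨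
      (k = 0 ∧ w = v 0) := by
  induction k with
  | zero =>
    intro _
    by_cases h : w = v 0
    · simp [h]
    · rcases T.total _ _ h with h | h
      · exact Or.inr (Or.inl h)
      · exact Or.inl h
  | succ k ih =>
    intro hp
    rcases ih (fun i hi => hp i (by omega)) with h | h | ⟨i, hi, h⟩ | ⟨h, h'⟩
    · exact Or.inl h
    · have hk := hp k (by omega)
      by_cases e : w = v (k + 1)
      · subst e; exact absurd h (T.asymm _ _ hk)
      · rcases T.total _ _ e with h1 | h1
        · exact Or.inr (Or.inl h1)
        · exact Or.inr (Or.inr (Or.inl ⟨k, by omega, h1, h⟩))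
    · exact Or.inr (Or.inr (Or.inl ⟨i, by omega, h⟩))
    · subst h; subst h'
      exact Or.inr (Or.inl (hp 0 (by omega)))

/-- Walks of given length from `a`. -/
def IsWalk (T : Tournament V) (a : V) : ℕ → V → Prop
  | 0, x => x = a
  | n + 1, x => ∃ y, IsWalk T a n y ∧ T.arc y x

lemma exists_dist {V : Type} (T : Tournament V) (a : V) (h : ∀ x, ∃ n, T.IsWalk a n x) :
    ∃ d : V → ℕ, d a = 0 ∧ (∀ x y, T.arc x y → d y ≤ d x + 1) ∧
      (∀ x, d x = 0 → x = a) ∧ ∀ x n, d x = n + 1 → ∃ y, d y = n ∧ T.arc y x := by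
  classical
  have key : ∀ x y, T.arc x y → Nat.find (h y) ≤ Nat.find (h x) + 1 := fun x y hxy =>
    Nat.find_min' (h y) ⟨x, Nat.find_spec (h x), hxy⟩
  refine ⟨fun x => Nat.find (h x), ?_, key, ?_, ?_⟩
  · have := Nat.find_min' (h a) (m := 0) rfl
    simpa using this
  · intro x hx
    have := Nat.find_spec (h x)
    simp only at hx
    rw [hx] at this
    exact this
  · intro x n hx
    have hs := Nat.find_spec (h x)
    simp only at hx
    rw [hx] at hs
    obtain ⟨y, hy, hyx⟩ := hs
    refine ⟨y, ?_, hyx⟩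
    have h1 := Nat.find_min' (h y) hy
    have h2 := key y x hyx
    simp only
    omega

lemma exists_path {V : Type} (T : Tournament V) (a : V) (d : V → ℕ)
    (h0 : ∀ x, d x = 0 → x = a) (hs : ∀ x n, d x = n + 1 → ∃ y, d y = n ∧ T.arc y x)
    (k : ℕ) : ∀ x, d x = k → ∃ v : ℕ → V, v 0 = a ∧ v k = x ∧ (∀ i ≤ k, d (v i) = i) ∧
      ∀ i < k, T.arc (v i) (v (i + 1)) := by
  induction k with
  | zero =>
    intro x hx
    refine ⟨fun _ => x, h0 x hx, rfl, ?_, ?_⟩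
    · intro i hi
      simp only
      omega
    · intro i hi; omega
  | succ k ih =>
    intro x hx
    obtain ⟨y, hy, hyx⟩ := hs x k hx
    obtain ⟨v, v0, vk, vd, va⟩ := ih y hy
    refine ⟨fun i => if i ≤ k then v i else x, by simp [v0], by simp, ?_, ?_⟩
    · intro i hi
      by_cases h : i ≤ k
      · simp [h, vd i h]
      · have : i = k + 1 := by omega
        subst this
        simp [hx]
    · intro i hi
      by_cases h : i < k
      · have h1 : i ≤ k := by omega
        have h2 : i + 1 ≤ k := by omega
        simpa [h1, h2] using va i h
      · have : i = k := by omega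
        subst this
        simpa [vk] using hyx

/-- The union of the zones with indices congruent to `r` modulo five. -/
def zone (T : Tournament V) (v : ℕ → V) (k r : ℕ) : Set V :=
  {w | ∃ i < k, i % 5 = r ∧ w ∈ T.arcNbhd (v i) (v (i + 1))}

lemma zone_trans {V : Type} (T : Tournament V) (hl : T.IsLight) (d : V → ℕ)
    (hd : ∀ x y, T.arc x y → d y ≤ d x + 1) (v : ℕ → V) (k r : ℕ)
    (vd : ∀ i ≤ k, d (v i) = i) (va : ∀ i < k, T.arc (v i) (v (i + 1))) :
    T.IsTransitiveSet (T.zone v k r) := by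
  have key : ∀ x y i j, i < k → j < k → i % 5 = r → j % 5 = r →
      x ∈ T.arcNbhd (v i) (v (i + 1)) → y ∈ T.arcNbhd (v j) (v (j + 1)) → T.arc x y →
      j ≤ i := by
    rintro x y i j hi hj hir hjr ⟨hx, -⟩ ⟨-, hy⟩ hxy
    have h1 := hd _ _ hx
    have h2 := hd _ _ hxy
    have h3 := hd _ _ hy
    rw [vd (i + 1) (by omega)] at h1
    rw [vd j (by omega)] at h3
    omega
  rintro x ⟨i, hi, ir, hx⟩ y ⟨j, hj, jr, hy⟩ z ⟨l, hl', lr, hz⟩ ⟨h1, h2, h3⟩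
  have k1 := key x y i j hi hj ir jr hx hy h1
  have k2 := key y z j l hj hl' jr lr hy hz h2
  have k3 := key z x l i hl' hi lr ir hz hx h3
  have e1 : j = i := by omega
  have e2 : l = i := by omega
  subst e1; subst e2
  exact T.light_trans hl (va l hi) x hx y hy z hz ⟨h1, h2, h3⟩

/-- The case where everything is reachable from the sink triangle. -/
lemma color_reachable {V : Type} (T : Tournament V) (hl : T.IsLight)
    (a b c a' b' c' : V) (hab : T.arc a b) (hbc : T.arc b c) (hca : T.arc c a)
    (hP : T.IsTransitiveSet (T.outC a b c))
    (hab' : T.arc a' b') (hbc' : T.arc b' c') (hca' : T.arc c' a')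
    (hQ : T.IsTransitiveSet (T.inC a' b' c'))
    (hr : ∀ x, ∃ n, T.IsWalk a n x) : T.ColorableOn Set.univ 8 := by
  by_cases hpq : ∃ p ∈ T.outC a b c, ∃ q ∈ T.inC a' b' c', T.arc p q
  · obtain ⟨p, hp, q, hq, hpq⟩ := hpq
    have hW : T.IsTransitiveSet (T.inC a b c ∩ T.outC a' b' c') := by
      refine T.trans_mono ?_ (T.light_trans hl hpq)
      rintro w ⟨h1, h2⟩
      exact ⟨T.in_beats_out hl hab' hbc' hca' hq h2, T.in_beats_out hl hab hbc hca h1 hp⟩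
    have hPW : T.IsTransitiveSet (T.outC a b c ∪ (T.inC a b c ∩ T.outC a' b' c')) := by
      refine T.trans_union hP hW ?_
      rintro x hx y ⟨hy, -⟩ hxy
      exact T.asymm _ _ hxy (T.in_beats_out hl hab hbc hca hy hx)
    refine T.colorable_of_eight _ _ _ _ _ _ _ _ hPW hQ (T.light_trans hl hab)
      (T.light_trans hl hbc) (T.light_trans hl hca) (T.light_trans hl hab')
      (T.light_trans hl hbc') (T.light_trans hl hca') ?_
    intro w
    have h1 := T.mixed hab hbc hca w
    have h2 := T.mixed hab' hbc' hca' w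
    simp only [Set.mem_union, Set.mem_inter_iff]
    tauto
  · push Not at hpq
    have hout : ∀ w, T.arc a w →
        w ∈ T.outC a b c ∨ w ∈ T.arcNbhd b c ∨ w ∈ T.arcNbhd c a := by
      intro w hw
      have hn := T.asymm _ _ hw
      rcases T.mixed hab hbc hca w with h | h | h | h | h
      · exact Or.inl h
      · exact absurd h.1 hn
      · exact absurd h.2 hn
      · exact Or.inr (Or.inl h)
      · exact Or.inr (Or.inr h)
    have hin : ∀ w, T.arc w a' →
        w ∈ T.inC a' b' c' ∨ w ∈ T.arcNbhd a' b' ∨ w ∈ T.arcNbhd b' c' := by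
      intro w hw
      have hn := T.asymm _ _ hw
      rcases T.mixed hab' hbc' hca' w with h | h | h | h | h
      · exact absurd h.1 hn
      · exact Or.inl h
      · exact Or.inr (Or.inl h)
      · exact Or.inr (Or.inr h)
      · exact absurd h.1 hn
    obtain ⟨d, -, hd, h0, hs⟩ := T.exists_dist a hr
    obtain ⟨v, v0, vk, vd, va⟩ := T.exists_path a d h0 hs (d a') a' rfl
    generalize d a' = k at vk vd va
    by_cases hk : k ≤ 3
    · have hz : ∀ i, T.IsTransitiveSet
          {w | (i < k ∧ w ∈ T.arcNbhd (v i) (v (i + 1))) ∨ (k = 0 ∧ w = v 0)} := by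
        intro i
        by_cases h : i < k
        · refine T.trans_mono ?_ (T.light_trans hl (va i h))
          rintro w (⟨-, h1⟩ | ⟨h1, -⟩)
          · exact h1
          · omega
        · rintro x (⟨h1, -⟩ | ⟨-, rfl⟩) y (⟨h2, -⟩ | ⟨-, rfl⟩) z hz ⟨h3, -⟩
          · omega
          · omega
          · omega
          · exact T.irrefl _ h3
      refine T.colorable_of_eight _ _ _ _ _ _ _ _ (T.trans_union hP hQ hpq)
        (T.light_trans hl hbc) (T.light_trans hl hca) (T.light_trans hl hab')
        (T.light_trans hl hbc') (hz 0) (hz 1) (hz 2) ?_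
      intro w
      simp only [Set.mem_union, Set.mem_ofPred_eq]
      rcases T.path_cover v w k va with h | h | ⟨i, hi, h⟩ | h
      · rw [v0] at h
        have := hout w h
        tauto
      · rw [vk] at h
        have := hin w h
        tauto
      · have hi3 : i < 3 := by omega
        interval_cases i
        · exact Or.inr (Or.inr (Or.inr (Or.inr (Or.inr (Or.inl (Or.inl ⟨hi, h⟩))))))
        · exact Or.inr (Or.inr (Or.inr (Or.inr (Or.inr (Or.inr (Or.inl (Or.inl ⟨hi, h⟩)))))))
        · exact Or.inr (Or.inr (Or.inr (Or.inr (Or.inr (Or.inr (Or.inr (Or.inl ⟨hi, h⟩)))))))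
      · tauto
    · have hno : ∀ x y, T.arc a x → T.arc y a' → ¬ T.arc x y := by
        intro x y hx hy hxy
        have h1 := hd _ _ hx
        have h2 := hd _ _ hxy
        have h3 := hd _ _ hy
        have h4 := vd 0 (by omega)
        have h5 := vd k le_rfl
        rw [v0] at h4
        rw [vk] at h5
        omega
      have hun : ∀ A B : Set V, T.IsTransitiveSet A → T.IsTransitiveSet B →
          T.IsTransitiveSet ((A ∩ {x | T.arc a x}) ∪ (B ∩ {x | T.arc x a'})) := by
        intro A B hA hB
        exact T.trans_union (T.trans_mono Set.inter_subset_left hA)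
          (T.trans_mono Set.inter_subset_left hB) fun x hx y hy => hno x y hx.2 hy.2
      have hz := fun r => T.zone_trans hl d hd v k r vd va
      refine T.colorable_of_eight _ _ _ _ _ _ _ _ (hz 0) (hz 1) (hz 2) (hz 3) (hz 4)
        (hun _ _ hP hQ) (hun _ _ (T.light_trans hl hbc) (T.light_trans hl hab'))
        (hun _ _ (T.light_trans hl hca) (T.light_trans hl hbc')) ?_
      intro w
      simp only [Set.mem_union, Set.mem_inter_iff, Set.mem_ofPred_eq]
      rcases T.path_cover v w k va with h | h | ⟨i, hi, h⟩ | h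
      · rw [v0] at h
        have := hout w h
        tauto
      · rw [vk] at h
        have := hin w h
        tauto
      · have hmem : w ∈ T.zone v k (i % 5) := ⟨i, hi, rfl, h⟩
        have hi5 : i % 5 < 5 := Nat.mod_lt _ (by norm_num)
        generalize i % 5 = r at hmem hi5
        interval_cases r <;> tauto
      · omega

/-- Induced subtournament on a subtype. -/
def sub (T : Tournament V) (p : V → Prop) : Tournament {x // p x} where
  arc u v := T.arc u.1 v.1
  asymm u v h := T.asymm u.1 v.1 h
  total u v h := T.total u.1 v.1 (fun e => h (Subtype.ext e))

lemma sub_light {V : Type} (T : Tournament V) (hl : T.IsLight) (p : V → Prop) :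
    (T.sub p).IsLight := by
  rintro u v ⟨h, a, b, c, ha, hb, hc, hh⟩
  exact hl u.1 v.1 ⟨h, a.1, b.1, c.1, ha, hb, hc, hh⟩

lemma main_induction (n : ℕ) : ∀ (V : Type) [Fintype V] (T : Tournament V), T.IsLight →
    Fintype.card V ≤ n → T.ColorableOn Set.univ 8 := by
  classical
  induction n with
  | zero =>
    intro V _ T _ hn
    have : IsEmpty V := Fintype.card_eq_zero_iff.mp (by omega)
    exact ⟨fun _ => 0, fun _ _ => by norm_num, fun i a => isEmptyElim a⟩
  | succ n ih =>
    intro V _ T hl hn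
    by_cases ht : T.IsTransitiveSet Set.univ
    · exact ⟨fun _ => 0, fun _ _ => by norm_num, fun i => T.trans_mono (Set.subset_univ _) ht⟩
    unfold IsTransitiveSet at ht
    push Not at ht
    obtain ⟨x, -, y, -, z, -, hxy, hyz, hzx⟩ := ht
    obtain ⟨a, b, c, hab, hbc, hca, hP⟩ := T.exists_sink hl _ x y z hxy hyz hzx le_rfl
    obtain ⟨a', b', c', hab', hbc', hca', hQ⟩ := T.exists_source hl x y z hxy hyz hzx
    by_cases hr : ∀ x, ∃ n, T.IsWalk a n x
    · exact T.color_reachable hl a b c a' b' c' hab hbc hca hP hab' hbc' hca' hQ hr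
    · push Not at hr
      obtain ⟨u, hu⟩ := hr
      let p : V → Prop := fun x => ∃ n, T.IsWalk a n x
      have hpu : ¬ p u := fun ⟨n, h⟩ => hu n h
      have hpa : p a := ⟨0, rfl⟩
      have hstep : ∀ x y, p x → T.arc x y → p y := by
        rintro x y ⟨m, hm⟩ h
        exact ⟨m + 1, x, hm, h⟩
      have c1 : Fintype.card {x // p x} < Fintype.card V := Fintype.card_subtype_lt hpu
      have c2 : Fintype.card {x // ¬ p x} < Fintype.card V :=
        Fintype.card_subtype_lt (x := a) (fun h => h hpa)
      obtain ⟨f, hf, hf'⟩ := ih _ (T.sub p) (T.sub_light hl p) (by omega)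
      obtain ⟨g, hg, hg'⟩ := ih _ (T.sub fun x => ¬ p x) (T.sub_light hl _) (by omega)
      refine ⟨fun x => if h : p x then f ⟨x, h⟩ else g ⟨x, h⟩, ?_, ?_⟩
      · intro x _
        by_cases h : p x
        · simpa [h] using hf ⟨x, h⟩ trivial
        · simpa [h] using hg ⟨x, h⟩ trivial
      · rintro i r ⟨-, hr⟩ s ⟨-, hs⟩ t ⟨-, ht⟩ ⟨h1, h2, h3⟩
        have k1 := fun e => hstep _ _ e h1
        have k2 := fun e => hstep _ _ e h2
        have k3 := fun e => hstep _ _ e h3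
        by_cases h : p r
        · have e1 := k1 h
          have e2 := k2 e1
          beta_reduce at hr hs ht
          rw [dif_pos h] at hr
          rw [dif_pos e1] at hs
          rw [dif_pos e2] at ht
          exact hf' i ⟨r, h⟩ ⟨trivial, hr⟩ ⟨s, e1⟩ ⟨trivial, hs⟩ ⟨t, e2⟩ ⟨trivial, ht⟩ ⟨h1, h2, h3⟩
        · have e2 : ¬ p t := fun e => h (k3 e)
          have e1 : ¬ p s := fun e => e2 (k2 e)
          beta_reduce at hr hs ht
          rw [dif_neg h] at hr
          rw [dif_neg e1] at hs
          rw [dif_neg e2] at ht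
          exact hg' i ⟨r, h⟩ ⟨trivial, hr⟩ ⟨s, e1⟩ ⟨trivial, hs⟩ ⟨t, e2⟩ ⟨trivial, ht⟩ ⟨h1, h2, h3⟩

end Tournament

theorem stmt_10 {V : Type} [Fintype V] (T : Tournament V) (hlight : T.IsLight) :
    T.ColorableOn Set.univ 8 := by
  exact Tournament.main_induction _ V T hlight le_rfl
end
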